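/- arXiv:2410.08789 — 4 statements merged into one kernel-verified Lean document; each statement's English description precedes it below -/
import Mathlib

section
/- Let f and g be almost permutations of ℕ. Then f =* g if and only if f[A] =* g[A] for every A ⊆ ℕ. -/
open Set Filter


/-- An almost permutation of `ℕ`: a bijection between a cofinite subset `dom`
of `ℕ` and a cofinite subset (its range) of `ℕ`.  The function `toFun` carries
arbitrary (junk) values outside of `dom`. -/
structure AlmostPerm where
  dom : Set ℕ
  toFun : ℕ → ℕ
  cofinite_dom : domᶜ.Finite
  injOn : Set.InjOn toFun dom
  cofinite_ran : (toFun '' dom)ᶜ.Finite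

namespace AlmostPerm

/-- The range of an almost permutation. -/
def ran (f : AlmostPerm) : Set ℕ := f.toFun '' f.dom

/-- The image `f[A]` of a set under an almost permutation. -/
def image (f : AlmostPerm) (A : Set ℕ) : Set ℕ := f.toFun '' (A ∩ f.dom)

/-- The (prodigal) index `|ℕ \ dom f| − |ℕ \ ran f|`. -/
noncomputable def index (f : AlmostPerm) : ℤ :=
  (Nat.card ↥(f.domᶜ) : ℤ) - (Nat.card ↥(f.ranᶜ) : ℤ)

/-- The one-step relation: `b = f(a)`. -/
def step (f : AlmostPerm) (a b : ℕ) : Prop := a ∈ f.dom ∧ f.toFun a = b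

/-- The orbit `O_f(n) = {f^k(n) : k ∈ ℤ, f^k(n) defined}`. -/
def orbit (f : AlmostPerm) (n : ℕ) : Set ℕ :=
  {m | Relation.ReflTransGen f.step n m ∨ Relation.ReflTransGen f.step m n}

end AlmostPerm


/-- `A =* B`: almost equality of sets (finite symmetric difference). -/
def SetEqStar (A B : Set ℕ) : Prop := (symmDiff A B).Finite


/-- `f =* g` for almost permutations: they agree at all but finitely many
points of `dom f ∩ dom g`. -/
def FunEqStar (f g : AlmostPerm) : Prop :=
  {x | x ∈ f.dom ∩ g.dom ∧ f.toFun x ≠ g.toFun x}.Finite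


/-- For almost permutations `f` and `g` of `ℕ`:
`f =* g` if and only if `f[A] =* g[A]` for every `A ⊆ ℕ`. -/
theorem funEqStar_iff_forall_image_eqStar (f g : AlmostPerm) :
    FunEqStar f g ↔ ∀ A : Set ℕ, SetEqStar (f.image A) (g.image A) := by
  constructor
  · intro h A
    have hS := (h.union f.cofinite_dom).union g.cofinite_dom
    refine ((hS.image f.toFun).union (hS.image g.toFun)).subset ?_
    rintro y (⟨⟨x, ⟨hA, hx⟩, rfl⟩, hn⟩ | ⟨⟨x, ⟨hA, hx⟩, rfl⟩, hn⟩)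
    · left
      refine ⟨x, ?_, rfl⟩
      by_cases hg : x ∈ g.dom
      · left; left
        exact ⟨⟨hx, hg⟩, fun e => hn ⟨x, ⟨hA, hg⟩, e.symm⟩⟩
      · right; exact hg
    · right
      refine ⟨x, ?_, rfl⟩
      by_cases hf : x ∈ f.dom
      · left; left
        exact ⟨⟨hf, hx⟩, fun e => hn ⟨x, ⟨hA, hf⟩, e⟩⟩
      · left; right; exact hf
  · intro h
    by_contra hB
    have key : ∀ (k : AlmostPerm) (T : Set ℕ), T.Finite → {y | y ∈ k.dom ∧ k.toFun y ∈ T}.Finite := by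
      intro k T hT
      refine Set.Finite.of_finite_image (f := k.toFun) (hT.subset ?_) (k.injOn.mono fun y hy => hy.1)
      rintro _ ⟨y, hy, rfl⟩
      exact hy.2
    obtain ⟨u, hu, hr⟩ := exists_seq_of_forall_finset_exists
      (fun x => x ∈ f.dom ∩ g.dom ∧ f.toFun x ≠ g.toFun x)
      (fun x y => x ≠ y ∧ g.toFun x ≠ f.toFun y ∧ f.toFun x ≠ g.toFun y) (by
        intro s _
        have hfin := (s.finite_toSet.union (key f _ (s.finite_toSet.image g.toFun))).union
          (key g _ (s.finite_toSet.image f.toFun))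
        obtain ⟨y, hy, hn⟩ := (Set.Infinite.diff hB hfin).nonempty
        refine ⟨y, hy, fun x hx => ⟨?_, ?_, ?_⟩⟩
        · rintro rfl
          exact hn (Or.inl (Or.inl hx))
        · intro e
          exact hn (Or.inl (Or.inr ⟨hy.1.1, x, hx, e⟩))
        · intro e
          exact hn (Or.inr ⟨hy.1.2, x, hx, e⟩))
    have hinj : Function.Injective (fun n => f.toFun (u n)) := by
      intro m n e
      have e' := f.injOn (hu m).1.1 (hu n).1.1 e
      rcases lt_trichotomy m n with hl | hl | hl
      · exact absurd e' (hr m n hl).1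
      · exact hl
      · exact absurd e'.symm (hr n m hl).1
    refine Set.infinite_range_of_injective hinj ((h (Set.range u)).subset ?_)
    rintro _ ⟨n, rfl⟩
    left
    refine ⟨⟨u n, ⟨⟨n, rfl⟩, (hu n).1.1⟩, rfl⟩, ?_⟩
    rintro ⟨_, ⟨⟨m, rfl⟩, _⟩, e⟩
    rcases lt_trichotomy m n with hl | hl | hl
    · exact (hr m n hl).2.1 e
    · subst hl; exact (hu m).2 e.symm
    · exact (hr n m hl).2.2 e.symm
end

section
/- If f and g are equivalent almost permutations of ℕ (i.e., there is an almost permutation h of ℕ with h∘f =* g∘h), then Index(f) = Index(g). -/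
open Set Filter


/-- Domain of the composition `g ∘ f` of almost permutations. -/
def compDom (g f : AlmostPerm) : Set ℕ := {n | n ∈ f.dom ∧ f.toFun n ∈ g.dom}


/-- `h ∘ f =* g ∘ h` for almost permutations `h`, `f`, `g`. -/
def ConjEqStar (h f g : AlmostPerm) : Prop :=
  {n | n ∈ compDom h f ∩ compDom g h ∧ h.toFun (f.toFun n) ≠ g.toFun (h.toFun n)}.Finite

/-- Equivalence of almost permutations: `f ∼ g` iff `h∘f =* g∘h` for some
almost permutation `h`. -/
def APEquiv (f g : AlmostPerm) : Prop := ∃ h : AlmostPerm, ConjEqStar h f g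



theorem ap_restrict (f : AlmostPerm) (D : Set ℕ) (hD : D ⊆ f.dom) (hf : Dᶜ.Finite) :
    (f.toFun '' D)ᶜ.Finite ∧
      (Set.ncard Dᶜ : ℤ) - (Set.ncard (f.toFun '' D)ᶜ : ℤ) = f.index := by
  have hdiff : (f.dom \ D).Finite := hf.subset (fun x hx => hx.2)
  have e1 : Dᶜ = f.domᶜ ∪ (f.dom \ D) := by
    ext x
    have := @hD x
    simp only [mem_compl_iff, mem_union, mem_diff]
    tauto
  have e2 : (f.toFun '' D)ᶜ = (f.toFun '' f.dom)ᶜ ∪ f.toFun '' (f.dom \ D) := by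
    ext y
    simp only [mem_compl_iff, mem_union, mem_image, mem_diff]
    constructor
    · intro hy
      by_cases h : ∃ x, x ∈ f.dom ∧ f.toFun x = y
      · obtain ⟨x, hx, rfl⟩ := h
        exact Or.inr ⟨x, ⟨hx, fun h => hy ⟨x, h, rfl⟩⟩, rfl⟩
      · exact Or.inl h
    · rintro (h | ⟨x, ⟨hx, hxD⟩, rfl⟩) ⟨z, hz, hzx⟩
      · exact h ⟨z, hD hz, hzx⟩
      · exact hxD (f.injOn (hD hz) hx hzx ▸ hz)
  have c1 : Set.ncard Dᶜ = Set.ncard f.domᶜ + Set.ncard (f.dom \ D) := by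
    rw [e1]
    apply Set.ncard_union_eq _ f.cofinite_dom hdiff
    exact Set.disjoint_left.2 (fun x hx h => hx h.1)
  have c2 : Set.ncard (f.toFun '' D)ᶜ
      = Set.ncard (f.toFun '' f.dom)ᶜ + Set.ncard (f.dom \ D) := by
    rw [e2, Set.ncard_union_eq _ f.cofinite_ran (hdiff.image _),
      Set.ncard_image_of_injOn (f.injOn.mono diff_subset)]
    exact Set.disjoint_left.2 (fun x hx h => hx (image_mono diff_subset h))
  refine ⟨e2 ▸ f.cofinite_ran.union (hdiff.image _), ?_⟩
  have c3 : f.index = (Set.ncard f.domᶜ : ℤ) - (Set.ncard (f.toFun '' f.dom)ᶜ : ℤ) := rfl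
  rw [c1, c2, c3]
  push_cast
  ring

theorem ap_compDom_cofinite (g f : AlmostPerm) : (compDom g f)ᶜ.Finite := by
  have h1 : (f.dom ∩ f.toFun ⁻¹' g.domᶜ).Finite := by
    apply Set.Finite.of_finite_image (f := f.toFun)
    · exact g.cofinite_dom.subset (by rintro _ ⟨x, hx, rfl⟩; exact hx.2)
    · exact f.injOn.mono inter_subset_left
  refine (f.cofinite_dom.union h1).subset ?_
  intro x hx
  by_cases hd : x ∈ f.dom
  · exact Or.inr ⟨hd, fun h => hx ⟨hd, h⟩⟩
  · exact Or.inl hd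

/-- Equivalent almost permutations have the same index. -/
theorem index_eq_of_apEquiv (f g : AlmostPerm) (h : APEquiv f g) :
    f.index = g.index := by
  obtain ⟨h, hc⟩ := h
  set B := {n | n ∈ compDom h f ∩ compDom g h ∧
    h.toFun (f.toFun n) ≠ g.toFun (h.toFun n)} with hB
  have hBf : B.Finite := hc
  set D := (compDom h f ∩ compDom g h) \ B with hDdef
  have hDf : Dᶜ.Finite := by
    refine (((ap_compDom_cofinite h f).union (ap_compDom_cofinite g h)).union hBf).subset ?_
    intro x hx
    simp only [hDdef, mem_compl_iff, mem_union, mem_diff, mem_inter_iff] at hx ⊢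
    tauto
  have heq : ∀ n ∈ D, h.toFun (f.toFun n) = g.toFun (h.toFun n) := by
    intro n hn
    by_contra hne
    exact hn.2 ⟨hn.1, hne⟩
  obtain ⟨a1, a2⟩ := ap_restrict f D (fun x hx => hx.1.1.1) hDf
  obtain ⟨b1, b2⟩ := ap_restrict h D (fun x hx => hx.1.2.1) hDf
  obtain ⟨_, a3⟩ := ap_restrict h (f.toFun '' D)
    (by rintro _ ⟨x, hx, rfl⟩; exact hx.1.1.2) a1
  obtain ⟨_, b3⟩ := ap_restrict g (h.toFun '' D)
    (by rintro _ ⟨x, hx, rfl⟩; exact hx.1.2.2) b1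
  have e : h.toFun '' (f.toFun '' D) = g.toFun '' (h.toFun '' D) := by
    rw [image_image, image_image]
    exact image_congr heq
  rw [e] at a3
  linarith
end

section
/- Let f be an almost permutation of ℕ, and let O be either an ℕ-like orbit of f, a reverse ℕ-like orbit of f, or a set of the form O⁺_f(n) or O⁻_f(n) for some n with a ℤ-like orbit. If A ⊆ ℕ and both O ∩ A and O \ A are infinite, then f[A] is not almost equal to A; that is, α_f([A]) ≠ [A], so [A] ∉ FIX_{α_f}. -/
open Set Filter


namespace AlmostPerm

/-- `O` is an ℕ-like orbit of `f`: the orbit of some `n ∈ dom f` with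
`f^k(n) ∉ ran f` for some `k < 0`. -/
def IsNLikeOrbit (f : AlmostPerm) (O : Set ℕ) : Prop :=
  ∃ n ∈ f.dom, O = f.orbit n ∧ ∃ m, Relation.TransGen f.step m n ∧ m ∉ f.ran

/-- `O` is a reverse ℕ-like orbit of `f`: the orbit of some `n ∈ dom f` with
`f^k(n) ∉ dom f` for some `k > 0`. -/
def IsRevNLikeOrbit (f : AlmostPerm) (O : Set ℕ) : Prop :=
  ∃ n ∈ f.dom, O = f.orbit n ∧ ∃ m, Relation.TransGen f.step n m ∧ m ∉ f.dom

/-- `n` has a ℤ-like orbit: its orbit is infinite and `f^k(n)` is defined for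
all `k ∈ ℤ`. -/
def HasZLikeOrbit (f : AlmostPerm) (n : ℕ) : Prop :=
  (f.orbit n).Infinite ∧ (∀ m, Relation.ReflTransGen f.step n m → m ∈ f.dom) ∧
    (∀ m, Relation.ReflTransGen f.step m n → m ∈ f.ran)

/-- `O⁺_f(n) = {f^k(n) : k > 0}`. -/
def posOrbit (f : AlmostPerm) (n : ℕ) : Set ℕ := {m | Relation.TransGen f.step n m}

/-- `O⁻_f(n) = {f^k(n) : k < 0}`. -/
def negOrbit (f : AlmostPerm) (n : ℕ) : Set ℕ := {m | Relation.TransGen f.step m n}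

/-- `O` is an ℕ-like orbit, a reverse ℕ-like orbit, or one of the sets
`O⁺_f(n)`, `O⁻_f(n)` for some `n` with a ℤ-like orbit. -/
def GoodOrbit (f : AlmostPerm) (O : Set ℕ) : Prop :=
  f.IsNLikeOrbit O ∨ f.IsRevNLikeOrbit O ∨
    ∃ n, f.HasZLikeOrbit n ∧ (O = f.posOrbit n ∨ O = f.negOrbit n)

end AlmostPerm


lemma fwd_aux (r : ℕ → ℕ → Prop) (hr : Relator.RightUnique r) (A : Set ℕ)
    (hD : {a | ∃ b, r a b ∧ ¬ (a ∈ A ↔ b ∈ A)}.Finite) (n : ℕ) (O : Set ℕ)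
    (hO : ∀ x ∈ O, Relation.ReflTransGen r n x)
    (h1 : (O ∩ A).Infinite) (h2 : (O \ A).Infinite) : False := by
  classical
  have hg : ∃ g : ℕ → ℕ, ∀ a, r a (g a) ∨ (g a = a ∧ ∀ b, ¬ r a b) := by
    have : ∀ a, ∃ c, r a c ∨ (c = a ∧ ∀ b, ¬ r a b) := by
      intro a
      by_cases h : ∃ b, r a b
      · exact ⟨h.choose, Or.inl h.choose_spec⟩
      · exact ⟨a, Or.inr ⟨rfl, fun b hb => h ⟨b, hb⟩⟩⟩
    choose g hg using this
    exact ⟨g, hg⟩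
  obtain ⟨g, hg⟩ := hg
  obtain ⟨s, hs0, hs⟩ : ∃ s : ℕ → ℕ, s 0 = n ∧ ∀ k, s (k+1) = g (s k) :=
    ⟨fun k => g^[k] n, rfl, fun k => Function.iterate_succ_apply' g k n⟩
  have hcov : ∀ x ∈ O, ∃ k, s k = x := by
    intro x hx
    have := hO x hx
    clear hx
    induction this with
    | refl => exact ⟨0, hs0⟩
    | tail _ hbc ih =>
      obtain ⟨k, hk⟩ := ih
      refine ⟨k+1, ?_⟩
      rw [hs, hk]
      rcases hg _ with h | h
      · exact hr h hbc
      · exact absurd hbc (h.2 _)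
  by_cases hinj : Function.Injective s
  · have hf := hD.preimage (hinj.injOn (s := s ⁻¹' _))
    obtain ⟨K, hK⟩ := hf.bddAbove
    have hstep : ∀ k, K < k → (s k ∈ A ↔ s (k+1) ∈ A) := by
      intro k hk
      by_contra hne
      rcases hg (s k) with h | h
      · have : k ≤ K := hK ⟨s (k+1), by rw [hs]; exact h, hne⟩
        omega
      · rw [hs, h.1] at hne
        exact hne Iff.rfl
    have hconst : ∀ k, K + 1 ≤ k → (s (K+1) ∈ A ↔ s k ∈ A) := by
      intro k hk
      induction k, hk using Nat.le_induction with
      | base => rfl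
      | succ k hk ih => exact ih.trans (hstep k hk)
    have hfin : (s '' Set.Iio (K+1)).Finite := (Set.finite_Iio _).image s
    by_cases hA : s (K+1) ∈ A
    · refine h2 (hfin.subset ?_)
      rintro x ⟨hx, hxA⟩
      obtain ⟨k, rfl⟩ := hcov x hx
      refine ⟨k, ?_, rfl⟩
      by_contra hk
      exact hxA ((hconst k (not_lt.1 hk)).1 hA)
    · refine h1 (hfin.subset ?_)
      rintro x ⟨hx, hxA⟩
      obtain ⟨k, rfl⟩ := hcov x hx
      refine ⟨k, ?_, rfl⟩
      by_contra hk
      exact hA ((hconst k (not_lt.1 hk)).2 hxA)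
  · obtain ⟨i, j, hij, hlt⟩ : ∃ i j, s i = s j ∧ i < j := by
      simp only [Function.Injective, not_forall] at hinj
      obtain ⟨i, j, h, hne⟩ := hinj
      rcases lt_or_gt_of_ne hne with h' | h'
      · exact ⟨i, j, h, h'⟩
      · exact ⟨j, i, h.symm, h'⟩
    have hper : ∀ k, ∃ l, l < j ∧ s l = s k := by
      intro k
      induction k with
      | zero => exact ⟨0, by omega, rfl⟩
      | succ k ih =>
        obtain ⟨l, hl, he⟩ := ih
        have he' : s (l+1) = s (k+1) := by rw [hs, hs, he]
        by_cases h : l + 1 < j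
        · exact ⟨l+1, h, he'⟩
        · have : l + 1 = j := by omega
          exact ⟨i, hlt, by rw [hij, ← this, he']⟩
    refine h1 (((Set.finite_Iio j).image s).subset ?_)
    rintro x ⟨hx, _⟩
    obtain ⟨k, rfl⟩ := hcov x hx
    obtain ⟨l, hl, he⟩ := hper k
    exact ⟨l, hl, he⟩

/-- If `O` is an ℕ-like orbit, a reverse ℕ-like orbit, or
one of the half-orbits `O⁺_f(n)`, `O⁻_f(n)` of a ℤ-like orbit, and both
`O ∩ A` and `O \ A` are infinite, then `f[A]` is not almost equal to `A`
(so `[A] ∉ FIX_{α_f}`). -/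
theorem not_fixed_of_splits_orbit (f : AlmostPerm) (O : Set ℕ)
    (hO : f.GoodOrbit O) (A : Set ℕ)
    (h1 : (O ∩ A).Infinite) (h2 : (O \ A).Infinite) :
    ¬ SetEqStar (f.image A) A := by
  intro hE
  have hR : Relator.RightUnique f.step := by
    rintro a b c ⟨_, h⟩ ⟨_, h'⟩
    exact h.symm.trans h'
  have hL : Relator.RightUnique (Function.swap f.step) := by
    rintro a b c ⟨hb, h⟩ ⟨hc, h'⟩
    exact f.injOn hb hc (h.trans h'.symm)
  have key : ∀ a b, f.step a b → ¬ (a ∈ A ↔ b ∈ A) → b ∈ symmDiff (f.image A) A := by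
    rintro a b ⟨ha, rfl⟩ hne
    have hi : f.toFun a ∈ f.image A ↔ a ∈ A := by
      constructor
      · rintro ⟨c, ⟨hcA, hc⟩, he⟩
        rwa [← f.injOn hc ha he]
      · intro h
        exact ⟨a, ⟨h, ha⟩, rfl⟩
    rw [Set.mem_symmDiff, hi]
    tauto
  have hDL : {b | ∃ a, Function.swap f.step b a ∧ ¬ (b ∈ A ↔ a ∈ A)}.Finite := by
    refine Set.Finite.subset hE ?_
    rintro b ⟨a, h, hne⟩
    exact key a b h (fun h => hne h.symm)
  have hDR : {a | ∃ b, f.step a b ∧ ¬ (a ∈ A ↔ b ∈ A)}.Finite := by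
    have hfin : (f.dom ∩ f.toFun ⁻¹' (symmDiff (f.image A) A)).Finite := by
      refine Set.Finite.of_finite_image (f := f.toFun) (Set.Finite.subset hE ?_)
        (f.injOn.mono Set.inter_subset_left)
      rintro _ ⟨a, ha, rfl⟩
      exact ha.2
    refine hfin.subset ?_
    rintro a ⟨b, h, hne⟩
    have := key a b h hne
    exact ⟨h.1, by rw [Set.mem_preimage, h.2]; exact this⟩
  have fwd : ∀ n, (∀ x ∈ O, Relation.ReflTransGen f.step n x) → False :=
    fun n h => fwd_aux f.step hR A hDR n O h h1 h2
  have bwd : ∀ n, (∀ x ∈ O, Relation.ReflTransGen f.step x n) → False :=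
    fun n h => fwd_aux _ hL A hDL n O
      (fun x hx => Relation.reflTransGen_swap.2 (h x hx)) h1 h2
  rcases hO with ⟨n, _, rfl, m, hmn, hm⟩ | ⟨n, _, rfl, m, hnm, hm⟩ | ⟨n, _, rfl | rfl⟩
  · refine fwd m ?_
    rintro x (hx | hx)
    · exact hmn.to_reflTransGen.trans hx
    · rcases Relation.ReflTransGen.total_of_right_unique hL
        (Relation.reflTransGen_swap.2 hx)
        (Relation.reflTransGen_swap.2 hmn.to_reflTransGen) with h | h
      · have h := Relation.reflTransGen_swap.1 h
        exact h
      · have h := Relation.reflTransGen_swap.1 h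
        rcases Relation.ReflTransGen.cases_tail h with h | ⟨c, _, hc⟩
        · rw [h]
        · exact absurd ⟨c, hc⟩ hm
  · refine bwd m ?_
    rintro x (hx | hx)
    · rcases Relation.ReflTransGen.total_of_right_unique hR hx hnm.to_reflTransGen with h | h
      · exact h
      · rcases Relation.ReflTransGen.cases_head h with h | ⟨c, hc, _⟩
        · rw [h]
        · exact absurd hc.1 hm
    · exact hx.trans hnm.to_reflTransGen
  · exact fwd n fun x hx => Relation.TransGen.to_reflTransGen hx
  · exact bwd n fun x hx => Relation.TransGen.to_reflTransGen hx
end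

section
/- Let f and g be almost permutations of ℕ such that Index(f) and Index(g) have different parities (Index(f) ≢ Index(g) mod 2). Then α_f and α_g are not conjugate: there is no automorphism γ of the Boolean algebra P(ℕ)/Fin such that γ∘α_f = α_g∘γ. -/
open Set Filter


/-- The Boolean algebra `P(ℕ)/Fin`, realized as germs of `ℕ → Prop` over the
cofinite filter on `ℕ`. -/
abbrev PFin : Type := Filter.Germ (Filter.cofinite : Filter ℕ) Prop

/-- The class `[A]` of a set `A ⊆ ℕ` in `P(ℕ)/Fin`. -/
def pfinMk (A : Set ℕ) : PFin := Filter.Germ.ofFun (fun n => n ∈ A)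



lemma pfinMk_eq {A B : Set ℕ} : pfinMk A = pfinMk B ↔ ∀ᶠ n in cofinite, (n ∈ A ↔ n ∈ B) := by
  unfold pfinMk
  rw [show (Filter.Germ.ofFun (fun n => n ∈ A) : PFin) = ((fun n => n ∈ A : ℕ → Prop) : PFin) from rfl]
  erw [Filter.Germ.coe_eq]
  simp [Filter.EventuallyEq]

lemma pfinMk_le {A B : Set ℕ} : pfinMk A ≤ pfinMk B ↔ ∀ᶠ n in cofinite, (n ∈ A → n ∈ B) := by
  unfold pfinMk
  erw [Filter.Germ.coe_le]
  rfl

lemma pfinMk_surj (x : PFin) : ∃ A, pfinMk A = x := by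
  induction x using Filter.Germ.inductionOn with
  | h f => exact ⟨{n | f n}, rfl⟩

lemma pfinMk_bot {A : Set ℕ} : pfinMk A = ⊥ ↔ A.Finite := by
  have : (⊥ : PFin) = pfinMk ∅ := rfl
  rw [this, pfinMk_eq]
  simp [Filter.eventually_cofinite]

lemma inv_card {E : Type*} (s : Set E) (hs : s.Finite) (σ : E → E) (hσ : ∀ e ∈ s, σ (σ e) = e)
    (hm : ∀ e ∈ s, σ e ∈ s) : {e ∈ s | σ e = e}.ncard ≡ s.ncard [MOD 2] := by
  classical
  have := hs.fintype
  let p : Function.End s := fun e => ⟨σ e, hm e e.2⟩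
  have hp : p ^ 2 ^ 1 = 1 := by
    funext e; apply Subtype.ext; exact hσ e e.2
  have := Equiv.Perm.card_fixedPoints_modEq (f := p) (p := 2) (n := 1) hp
  have h2 : Fintype.card (Function.fixedPoints p) = {e ∈ s | σ e = e}.ncard := by
    rw [← Nat.card_eq_fintype_card, Nat.card_coe_set_eq,
      ← Set.ncard_image_of_injective _ Subtype.val_injective]
    congr 1
    ext e
    simp [Function.IsFixedPt, p, Function.fixedPoints, and_comm]
  rw [h2] at this
  rw [← Nat.card_coe_set_eq s, Nat.card_eq_fintype_card]
  exact this.symm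

lemma parity_core {E : Type*} (τ τ' : E → E) (hτ : ∀ e, τ (τ e) = e) (hτ' : ∀ e, τ' (τ' e) = e)
    (hf : {e | τ e = e}.Finite) (hf' : {e | τ' e = e}.Finite)
    (h : ∀ S : Set E, (∀ e ∈ S, τ e ∈ S) → {e ∈ S | τ' e ∉ S}.Finite) :
    {e | τ e = e}.ncard ≡ {e | τ' e = e}.ncard [MOD 2] := by
  classical
  have hi : Function.Injective τ := fun a b h => by rw [← hτ a, h, hτ]
  have hi' : Function.Injective τ' := fun a b h => by rw [← hτ' a, h, hτ']
  have hD : {e | τ e ≠ τ' e}.Finite := by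
    by_contra hinf
    have hinf : {e | τ e ≠ τ' e}.Infinite := hinf
    have hinf2 := hinf.sdiff hf'
    obtain ⟨s, hs, hr⟩ := exists_seq_of_forall_finset_exists
      (fun e => τ e ≠ τ' e ∧ τ' e ≠ e)
      (fun x y => y ≠ x ∧ y ≠ τ' x ∧ y ≠ τ' (τ x) ∧ y ≠ τ (τ' x)) (by
        intro t _
        have := (hinf2.sdiff (t ∪ t.image τ' ∪ t.image (fun x => τ' (τ x))
          ∪ t.image (fun x => τ (τ' x))).finite_toSet).nonempty
        obtain ⟨y, hy, hy2⟩ := this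
        refine ⟨y, hy, ?_⟩
        intro x hx
        simp only [Finset.coe_union, Finset.coe_image, Set.mem_union, Set.mem_image, not_or,
          not_exists, not_and, Finset.mem_coe] at hy2
        refine ⟨?_, ?_, ?_, ?_⟩ <;> rintro rfl
        · exact hy2.1.1.1 hx
        · exact hy2.1.1.2 x hx rfl
        · exact hy2.1.2 x hx rfl
        · exact hy2.2 x hx rfl)
    have hsinj : Function.Injective s := by
      intro m n hmn
      rcases lt_trichotomy m n with h1 | h1 | h1
      · exact absurd hmn.symm (hr m n h1).1
      · exact h1
      · exact absurd hmn (hr n m h1).1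
    have := h (Set.range s ∪ Set.range (τ ∘ s)) (by
      rintro e (⟨n, rfl⟩ | ⟨n, rfl⟩)
      · exact Or.inr ⟨n, rfl⟩
      · exact Or.inl ⟨n, by simp [hτ]⟩)
    refine (Set.infinite_range_of_injective hsinj) (this.subset ?_)
    rintro _ ⟨n, rfl⟩
    refine ⟨Or.inl ⟨n, rfl⟩, ?_⟩
    rintro (⟨m, hm⟩ | ⟨m, hm⟩)
    · rcases lt_trichotomy m n with h1 | h1 | h1
      · exact (hr m n h1).2.1 (by rw [hm, hτ'])
      · subst h1; exact (hs m).2 hm.symm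
      · exact (hr n m h1).2.1 hm
    · simp only [Function.comp] at hm
      rcases lt_trichotomy m n with h1 | h1 | h1
      · exact (hr m n h1).2.2.1 (by rw [hm, hτ'])
      · subst h1; exact (hs m).1 hm
      · exact (hr n m h1).2.2.2 (by rw [← hm, hτ])
  set D := {e | τ e ≠ τ' e} with hDd
  have key : ∀ σ : E → E, {e | σ e = e}.Finite → 
      {e | σ e = e}.ncard = {e ∈ D | σ e = e}.ncard + {e | σ e = e ∧ e ∉ D}.ncard := by
    intro σ hσ
    rw [← Set.ncard_inter_add_ncard_sdiff_eq_ncard _ D hσ]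
    congr 2
    ext; simp [and_comm]
  have h1 := inv_card D hD τ (fun e _ => hτ e) (by
    intro e he h; apply he; rw [hτ] at h; rw [h, hτ', ← h])
  have h2 := inv_card D hD τ' (fun e _ => hτ' e) (by
    intro e he h; apply he; rw [hτ'] at h; rw [← h, hτ, h])
  rw [key τ hf, key τ' hf']
  have : {e | τ e = e ∧ e ∉ D} = {e | τ' e = e ∧ e ∉ D} := by
    ext e
    simp only [Set.mem_ofPred_eq, hDd, not_not]
    constructor
    · rintro ⟨a, b⟩; exact ⟨b ▸ a, b⟩
    · rintro ⟨a, b⟩; exact ⟨b.trans a, b⟩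
  rw [this]
  exact (h1.trans h2.symm).add_right _

def FAtom (α : PFin → PFin) (x : PFin) : Prop :=
  α x = x ∧ x ≠ ⊥ ∧ ∀ y, α y = y → y ≤ x → y = ⊥ ∨ y = x

structure EndSys (α : PFin → PFin) (n : ℕ) where
  E : Type
  ε : E → PFin
  inj : Function.Injective ε
  atom : ∀ e, FAtom α (ε e)
  surj : ∀ x, FAtom α x → ∃ e, ε e = x
  τ : E → E
  inv : ∀ e, τ (τ e) = e
  almost : ∀ x, α x = x → {e | ε e ≤ x ∧ ¬ ε (τ e) ≤ x}.Finite
  realize : ∀ S : Set E, (∀ e ∈ S, τ e ∈ S) → ∃ x, α x = x ∧ ∀ e, ε e ≤ x ↔ e ∈ S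
  fin : {e | τ e = e}.Finite
  card : {e | τ e = e}.ncard ≡ n [MOD 2]

lemma fatom_map {α β : PFin → PFin} (γ : PFin ≃o PFin) (h : ∀ x, γ (α x) = β (γ x)) {x : PFin}
    (hx : FAtom α x) : FAtom β (γ x) := by
  obtain ⟨a, b, c⟩ := hx
  refine ⟨by rw [← h, a], by simpa using b, ?_⟩
  intro y hy hle
  have := c (γ.symm y) (γ.injective (by rw [h]; simpa using hy)) (by
    rw [γ.symm_apply_le]; exact hle)
  rcases this with h1 | h1
  · left; simpa using h1
  · right; rw [← h1]; simp

lemma endSys_compare {α β : PFin → PFin} (γ : PFin ≃o PFin) (h : ∀ x, γ (α x) = β (γ x))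
    {n m : ℕ} (s : EndSys α n) (t : EndSys β m) : n ≡ m [MOD 2] := by
  have h' : ∀ x, γ.symm (β x) = α (γ.symm x) := fun x => γ.injective (by simp [h])
  have h1 : ∀ e : s.E, ∃ e' : t.E, t.ε e' = γ (s.ε e) := fun e =>
    t.surj _ (fatom_map γ h (s.atom e))
  have h2 : ∀ e : t.E, ∃ e' : s.E, s.ε e' = γ.symm (t.ε e) := fun e =>
    s.surj _ (fatom_map γ.symm h' (t.atom e))
  choose φ hφ using h1
  choose ψ hψ using h2
  have hψφ : ∀ e, ψ (φ e) = e := fun e => s.inj (by rw [hψ, hφ]; simp)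
  have hφψ : ∀ e, φ (ψ e) = e := fun e => t.inj (by rw [hφ, hψ]; simp)
  have hle : ∀ e x, t.ε (φ e) ≤ x ↔ s.ε e ≤ γ.symm x := by
    intro e x; rw [hφ, γ.le_symm_apply]
  have hfs : {e | ψ (t.τ (φ e)) = e} = ψ '' {e | t.τ e = e} := by
    ext e
    constructor
    · intro he
      refine ⟨φ e, ?_, hψφ e⟩
      have he : ψ (t.τ (φ e)) = e := he
      change t.τ (φ e) = φ e
      conv_rhs => rw [← he]
      rw [hφψ]
    · rintro ⟨e, he, rfl⟩
      change ψ (t.τ (φ (ψ e))) = _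
      rw [hφψ, he]
  have := parity_core s.τ (fun e => ψ (t.τ (φ e))) s.inv (fun e => by simp [hφψ, t.inv, hψφ])
    s.fin (by rw [hfs]; exact t.fin.image _) (by
      intro S hS
      obtain ⟨x, hx, hxS⟩ := s.realize S hS
      have := (t.almost (γ x) (by rw [← h, hx])).image ψ
      refine this.subset ?_
      rintro e ⟨he, he'⟩
      refine ⟨φ e, ⟨?_, ?_⟩, hψφ e⟩
      · rw [hle]; simpa [hxS] using he
      · rw [← hφψ (t.τ (φ e)), hle]; simpa [hxS] using he')
  rw [hfs, Set.ncard_image_of_injective _ (fun a b hab => by rw [← hφψ a, hab, hφψ])] at this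
  exact s.card.symm.trans (this.trans t.card)

set_option linter.all false
lemma zorbits {M : Type} (F : Equiv.Perm M) : ∃ (Q : Type) (P : Q → ℤ → M),
    (∀ q z, F (P q z) = P q (z + 1)) ∧
    (∀ q z q' z', P q z = P q' z' → q = q' ∧ z = z') ∧
    (∀ q z m, F.SameCycle (P q z) m → ∃ z', P q z' = m) ∧
    ∀ m, (∃ q z, P q z = m) ∨ {y | F.SameCycle m y}.Finite := by
  classical
  let S := Equiv.Perm.SameCycle.setoid F
  refine ⟨{q : Quotient S // ∀ z : ℤ, (F ^ z) q.out = q.out → z = 0},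
    fun q z => (F ^ z) q.1.out, ?_, ?_, ?_, ?_⟩
  · intro q z
    show F ((F ^ z) q.1.out) = (F ^ (z + 1)) q.1.out
    rw [add_comm, zpow_add]; simp
  · intro q z q' z' h
    simp only at h
    have hq : q = q' := by
      apply Subtype.ext
      rw [← Quotient.out_eq q.1, ← Quotient.out_eq q'.1]
      apply Quotient.sound
      refine ⟨-z' + z, ?_⟩
      rw [zpow_add, Equiv.Perm.mul_apply, h, zpow_neg]; simp
    subst hq
    refine ⟨rfl, ?_⟩
    have := q.2 (-z' + z) (by rw [zpow_add, Equiv.Perm.mul_apply, h, zpow_neg]; simp)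
    omega
  · rintro q z m ⟨w, hw⟩
    refine ⟨w + z, ?_⟩
    simp only at hw
    show (F ^ (w + z)) q.1.out = m
    rw [← hw, zpow_add]; rfl
  · intro m
    by_cases h : ∀ z : ℤ, (F ^ z) (Quotient.out (Quotient.mk S m)) =
        Quotient.out (Quotient.mk S m) → z = 0
    · left
      have : F.SameCycle (Quotient.out (Quotient.mk S m)) m := Quotient.exact (s := S) (Quotient.out_eq (Quotient.mk S m))
      obtain ⟨z, hz⟩ := this
      exact ⟨⟨_, h⟩, z, hz⟩
    · right
      push Not at h
      have h2 : F.SameCycle (Quotient.out (Quotient.mk S m)) m := Quotient.exact (s := S) (Quotient.out_eq (Quotient.mk S m))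
      generalize Quotient.out (Quotient.mk S m) = r at h h2
      obtain ⟨z, hz, hz0⟩ := h
      have : {y | F.SameCycle m y} ⊆ (fun k : ℤ => (F ^ k) r) '' (Set.Ico 0 |z|) := by
        intro y hy
        obtain ⟨w, hw⟩ := h2.trans hy
        refine ⟨w % z, ⟨Int.emod_nonneg _ hz0, Int.emod_lt_abs _ hz0⟩, ?_⟩
        have h3 : (F ^ (z * (w / z))) r = r := by
          rw [zpow_mul]
          exact Equiv.Perm.zpow_apply_eq_self_of_apply_eq_self hz _
        have h4 : (F ^ (w % z + z * (w / z))) r = y := by rw [Int.emod_add_mul_ediv]; exact hw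
        rw [zpow_add, Equiv.Perm.mul_apply, h3] at h4
        exact h4
      exact ((Set.finite_Ico _ _).image _).subset this

/-- almost invariant -/
def AInv {M : Type} (F : Equiv.Perm M) (A : Set M) : Prop := {m | ¬ (m ∈ A ↔ F m ∈ A)}.Finite

lemma AInv.inter {M : Type} {F : Equiv.Perm M} {A B : Set M} (hA : AInv F A) (hB : AInv F B) :
    AInv F (A ∩ B) := by
  refine (Set.Finite.union hA hB).subset ?_
  intro m hm
  simp only [Set.mem_union, Set.mem_ofPred_eq, Set.mem_inter_iff] at hm ⊢
  tauto

lemma AInv.of_invariant {M : Type} {F : Equiv.Perm M} {A : Set M} (h : ∀ m, m ∈ A ↔ F m ∈ A) :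
    AInv F A := by
  have : {m | ¬ (m ∈ A ↔ F m ∈ A)} = ∅ := by ext m; simpa using h m
  unfold AInv; rw [this]; exact Set.finite_empty

def sg (b : Bool) : ℤ := if b then 1 else -1

lemma sg_cases (b : Bool) : sg b = 1 ∨ sg b = -1 := by cases b <;> simp [sg]

def pt {M Q : Type} (P : Q → ℤ → M) (e : Q × Bool) (k : ℕ) : M := P e.1 (sg e.2 * k)

lemma pt_inj {M Q : Type} {P : Q → ℤ → M}
    (hP : ∀ q z q' z', P q z = P q' z' → q = q' ∧ z = z') (e : Q × Bool) :
    Function.Injective (pt P e) := by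
  intro k l h
  have := (hP _ _ _ _ h).2
  rcases sg_cases e.2 with h | h <;> rw [h] at this <;> omega

lemma pt_inj2 {M Q : Type} {P : Q → ℤ → M}
    (hP : ∀ q z q' z', P q z = P q' z' → q = q' ∧ z = z') {e e' : Q × Bool} {k l : ℕ}
    (hk : k ≠ 0) (h : pt P e k = pt P e' l) : e = e' := by
  obtain ⟨h1, h2⟩ := hP _ _ _ _ h
  obtain ⟨q, b⟩ := e
  obtain ⟨q', b'⟩ := e'
  simp only at h1 h2
  subst h1
  cases b <;> cases b' <;> simp [sg] at h2 ⊢ <;> omega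

def InE {M Q : Type} (P : Q → ℤ → M) (e : Q × Bool) (A : Set M) : Prop :=
  ∀ᶠ k in atTop, pt P e k ∈ A

lemma inE_or {M Q : Type} {F : Equiv.Perm M} {P : Q → ℤ → M}
    (hF : ∀ q z, F (P q z) = P q (z + 1))
    (hP : ∀ q z q' z', P q z = P q' z' → q = q' ∧ z = z') {A : Set M} (hA : AInv F A)
    (e : Q × Bool) : InE P e A ∨ InE P e Aᶜ := by
  have h1 : ∀ᶠ k in atTop, (pt P e k ∈ A ↔ pt P e (k + 1) ∈ A) := by
    rw [← Nat.cofinite_eq_atTop, Filter.eventually_cofinite]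
    rcases sg_cases e.2 with h | h
    · refine (hA.preimage (f := pt P e) (pt_inj hP e).injOn).subset ?_
      intro k hk
      simp only [Set.mem_preimage, Set.mem_ofPred_eq] at hk ⊢
      convert hk using 3
      simp only [pt, hF, h]
      congr 1 <;> push_cast <;> ring
    · refine (hA.preimage (f := fun k => pt P e (k + 1))
        (fun a _ b _ hab => by simpa using pt_inj hP e hab)).subset ?_
      intro k hk
      simp only [Set.mem_preimage, Set.mem_ofPred_eq] at hk ⊢
      have : F (pt P e (k + 1)) = pt P e k := by
        simp only [pt, hF, h]
        congr 1 <;> push_cast <;> ring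
      rw [this]; tauto
  obtain ⟨K, hK⟩ := eventually_atTop.1 h1
  have h2 : ∀ k ≥ K, (pt P e k ∈ A ↔ pt P e K ∈ A) := by
    intro k hk
    induction k, hk using Nat.le_induction with
    | base => rfl
    | succ k hk ih => rw [← hK k hk, ih]
  by_cases hKA : pt P e K ∈ A
  · left; exact eventually_atTop.2 ⟨K, fun k hk => (h2 k hk).2 hKA⟩
  · right; exact eventually_atTop.2 ⟨K, fun k hk h => hKA ((h2 k hk).1 h)⟩

lemma inE_not {M Q : Type} {P : Q → ℤ → M} {A : Set M} {e : Q × Bool} (h : InE P e A)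
    (h' : InE P e Aᶜ) : False := by
  obtain ⟨k, h1, h2⟩ := (h.and h').exists
  exact h2 h1

lemma ainv_range_pt {M Q : Type} {F : Equiv.Perm M} {P : Q → ℤ → M}
    (hF : ∀ q z, F (P q z) = P q (z + 1)) (e : Q × Bool) : AInv F (Set.range (pt P e)) := by
  refine (Set.toFinite {P e.1 0, P e.1 (-1)}).subset ?_
  intro m hm
  by_contra hcon
  simp only [Set.mem_insert_iff, Set.mem_singleton_iff, not_or] at hcon
  apply hm
  rcases sg_cases e.2 with h | h
  · constructor
    · rintro ⟨k, rfl⟩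
      exact ⟨k + 1, by simp only [pt, hF, h]; congr 1 <;> push_cast <;> ring⟩
    · rintro ⟨k, hk⟩
      rcases k with _ | k
      · exfalso; apply hcon.2; apply F.injective
        rw [← hk, hF]; simp [pt]
      · refine ⟨k, F.injective ?_⟩
        rw [← hk]; simp only [pt, hF, h]; congr 1 <;> push_cast <;> ring
  · constructor
    · rintro ⟨k, rfl⟩
      rcases k with _ | k
      · exfalso; apply hcon.1; simp [pt]
      · exact ⟨k, by simp only [pt, hF, h]; congr 1 <;> push_cast <;> ring⟩
    · rintro ⟨k, hk⟩
      refine ⟨k + 1, F.injective ?_⟩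
      rw [← hk]; simp only [pt, hF, h]; congr 1 <;> push_cast <;> ring

lemma split_infinite {O : Type} {s : Set O} (hs : s.Infinite) :
    ∃ t ⊆ s, t.Infinite ∧ (s \ t).Infinite := by
  let u := hs.natEmbedding
  refine ⟨Set.range (fun n : ℕ => (u (2 * n) : O)), ?_, ?_, ?_⟩
  · rintro _ ⟨n, rfl⟩; exact (u _).2
  · refine Set.infinite_range_of_injective ?_
    intro a b h
    have := u.injective (Subtype.ext h); omega
  · have : (Set.range (fun n : ℕ => (u (2 * n + 1) : O))).Infinite := by
      refine Set.infinite_range_of_injective ?_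
      intro a b h
      have := u.injective (Subtype.ext h); omega
    refine this.mono ?_
    rintro _ ⟨n, rfl⟩
    refine ⟨(u _).2, ?_⟩
    rintro ⟨m, hm⟩
    have := u.injective (Subtype.ext hm); omega

lemma inE_iff {M Q : Type} {P : Q → ℤ → M} {e : Q × Bool} {A : Set M} :
    InE P e A ↔ {k | pt P e k ∉ A}.Finite := by
  unfold InE
  rw [← Nat.cofinite_eq_atTop, Filter.eventually_cofinite]

lemma swap_card {Q : Type} (s : Set (Q × Bool)) (hs : s.Finite) :
    {e ∈ s | (e.1, !e.2) ∉ s}.ncard ≡ s.ncard [MOD 2] := by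
  classical
  have := inv_card s hs
    (fun e => if (e.1, !e.2) ∉ s then e else (e.1, !e.2)) (by
      intro e he
      by_cases h : (e.1, !e.2) ∈ s <;> simp [h, he]) (by
      intro e he
      by_cases h : (e.1, !e.2) ∈ s
      · simp [h]
      · simpa [h] using he)
  convert this using 2
  ext e
  simp only [Set.mem_ofPred_eq]
  apply and_congr_right
  intro he
  by_cases h : (e.1, !e.2) ∈ s
  · simp only [h, not_true_eq_false, if_false, false_iff]
    intro h'
    have := congrArg Prod.snd h'
    simp at this
  · simp [h]

set_option maxHeartbeats 1000000 in
lemma mkEndSys (α : PFin → PFin) {M : Type} (F : Equiv.Perm M) (i : ℕ → M)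
    (hi : Function.Injective i)
    (hfix : ∀ X, α (pfinMk X) = pfinMk X ↔ AInv F (i '' X)) (hR : AInv F (Set.range i)) (n : ℕ)
    (hmiss : ∀ (Q : Type) (P : Q → ℤ → M), (∀ q z, F (P q z) = P q (z + 1)) →
      (∀ q z q' z', P q z = P q' z' → q = q' ∧ z = z') →
      (∀ m, (∃ q z, P q z = m) ∨ {y | F.SameCycle m y}.Finite) →
      {e : Q × Bool | ¬ InE P e (Set.range i)}.Finite ∧
      {e : Q × Bool | ¬ InE P e (Set.range i)}.ncard = n) : Nonempty (EndSys α n) := by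
  classical
  obtain ⟨Q, P, hF, hP, hsc, hm⟩ := zorbits F
  obtain ⟨hmf, hmc⟩ := hmiss Q P hF hP hm
  set R := Set.range i with hRd
  let E := {e : Q × Bool // InE P e R}
  let eps : E → Set ℕ := fun e => i ⁻¹' (Set.range (pt P e.1))
  have heps : ∀ e, i '' (eps e) = Set.range (pt P e.1) ∩ R := by
    intro e; rw [Set.image_preimage_eq_inter_range]
  have hle : ∀ (e : E) (X : Set ℕ), pfinMk (eps e) ≤ pfinMk X ↔ InE P e.1 (i '' X) := by
    intro e X
    rw [pfinMk_le]
    have he := inE_iff.1 e.2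
    rw [inE_iff, Filter.eventually_cofinite]
    constructor
    · intro h
      have h2 := (h.image i).preimage (f := pt P e.1) (pt_inj hP e.1).injOn
      refine (h2.union he).subset ?_
      intro k hk
      by_cases hkR : pt P e.1 k ∈ R
      · left
        obtain ⟨x, hx⟩ := hkR
        refine ⟨x, ?_, hx⟩
        simp only [Set.mem_ofPred_eq]
        intro h3
        exact hk ⟨x, h3 ⟨k, hx.symm⟩, hx⟩
      · right; exact hkR
    · intro h
      refine ((h.image (pt P e.1)).preimage hi.injOn).subset ?_
      intro x hx
      simp only [Set.mem_ofPred_eq, Classical.not_imp] at hx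
      obtain ⟨⟨k, hk⟩, hx2⟩ := hx
      refine ⟨k, ?_, hk⟩
      rintro ⟨y, hy, hy2⟩
      rw [hk] at hy2
      exact hx2 (hi hy2 ▸ hy)
  have hafix : ∀ e, α (pfinMk (eps e)) = pfinMk (eps e) := by
    intro e; rw [hfix, heps]; exact (ainv_range_pt hF e.1).inter hR
  have hanb : ∀ e, pfinMk (eps e) ≠ ⊥ := by
    intro e h
    have h1 := (hle e ∅).1 (by rw [h]; exact bot_le)
    obtain ⟨k, hk⟩ := h1.exists
    simp at hk
  have hatom : ∀ e, FAtom α (pfinMk (eps e)) := by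
    intro e
    refine ⟨hafix e, hanb e, ?_⟩
    intro y hy hye
    obtain ⟨X, rfl⟩ := pfinMk_surj y
    rcases inE_or hF hP ((hfix X).1 hy) e.1 with h | h
    · right; exact le_antisymm hye ((hle e X).2 h)
    · left
      rw [pfinMk_bot]
      rw [pfinMk_le, Filter.eventually_cofinite] at hye
      rw [inE_iff] at h
      refine (hye.union ((h.image (pt P e.1)).preimage hi.injOn)).subset ?_
      intro x hx
      by_cases hxe : x ∈ eps e
      · right
        obtain ⟨k, hk⟩ := hxe
        exact ⟨k, by simp only [Set.mem_ofPred_eq, Set.mem_compl_iff, not_not]; rw [hk]; exact ⟨x, hx, rfl⟩, hk⟩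
      · left; simp [hx, hxe]
  have hinj : Function.Injective (fun e => pfinMk (eps e)) := by
    intro e e' h
    have h1 := (hle e _).1 (le_of_eq h)
    rw [heps] at h1
    obtain ⟨k, hk, hk0⟩ := (h1.and (eventually_ge_atTop 1)).exists
    obtain ⟨l, hl⟩ := hk.1
    exact Subtype.ext (pt_inj2 hP (by omega) hl.symm)
  have hsurj : ∀ x, FAtom α x → ∃ e, pfinMk (eps e) = x := by
    intro x hx
    obtain ⟨X, rfl⟩ := pfinMk_surj x
    obtain ⟨h1, h2, h3⟩ := hx
    have hA := (hfix X).1 h1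
    let S := Equiv.Perm.SameCycle.setoid F
    let o : M → Quotient S := fun m => Quotient.mk S m
    have hoF : ∀ m, o (F m) = o m := fun m =>
      Quotient.sound (s := S) (Equiv.Perm.sameCycle_apply_left.2 (Equiv.Perm.SameCycle.refl _ _))
    by_cases hO : (o '' (i '' X)).Infinite
    · exfalso
      obtain ⟨T, hT, hT1, hT2⟩ := split_infinite hO
      let Y := {x ∈ X | o (i x) ∈ T}
      have hY : i '' Y = i '' X ∩ {m | o m ∈ T} := by
        ext m; constructor
        · rintro ⟨x, hx, rfl⟩; exact ⟨⟨x, hx.1, rfl⟩, hx.2⟩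
        · rintro ⟨⟨x, hx, rfl⟩, hx2⟩; exact ⟨x, ⟨hx, hx2⟩, rfl⟩
      have hYf : α (pfinMk Y) = pfinMk Y := by
        rw [hfix, hY]
        exact hA.inter (AInv.of_invariant (fun m => by simp [hoF]))
      rcases h3 _ hYf (by rw [pfinMk_le]; exact Eventually.of_forall (fun x hx => hx.1)) with h | h
      · rw [pfinMk_bot] at h
        refine hT1 (((h.image i).image o).subset ?_)
        intro t ht
        obtain ⟨_, ⟨x, hx, rfl⟩, rfl⟩ := hT ht
        exact ⟨_, ⟨x, ⟨hx, ht⟩, rfl⟩, rfl⟩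
      · rw [pfinMk_eq, Filter.eventually_cofinite] at h
        refine hT2 (((h.image i).image o).subset ?_)
        rintro t ⟨ht, ht2⟩
        obtain ⟨_, ⟨x, hx, rfl⟩, rfl⟩ := ht
        exact ⟨_, ⟨x, fun h => ht2 (h.2 hx).2, rfl⟩, rfl⟩
    · rw [Set.not_infinite] at hO
      have hXi : (i '' X).Infinite := by
        intro h; exact h2 (pfinMk_bot.2 (Set.Finite.of_finite_image h hi.injOn))
      have : ∃ t ∈ o '' (i '' X), (i '' X ∩ o ⁻¹' {t}).Infinite := by
        by_contra hcon
        push Not at hcon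
        refine hXi ((hO.biUnion hcon).subset ?_)
        intro m hm
        simp only [Set.mem_iUnion]
        exact ⟨o m, ⟨m, hm, rfl⟩, hm, rfl⟩
      obtain ⟨_, ⟨m, hmX, rfl⟩, ht⟩ := this
      rcases hm m with ⟨q, z, rfl⟩ | hfin
      · have h4 : ∃ b : Bool, {k : ℕ | pt P (q, b) k ∈ i '' X}.Infinite := by
          by_contra hcon
          push Not at hcon
          refine ht ((((hcon true).image (pt P (q, true))).union
            ((hcon false).image (pt P (q, false)))).subset ?_)
          rintro y ⟨hy, hy2⟩
          have : F.SameCycle (P q z) y := Quotient.exact (s := S) (hy2 : o y = _).symm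
          obtain ⟨w, rfl⟩ := hsc _ _ _ this
          rcases Int.eq_nat_or_neg w with ⟨k, rfl | rfl⟩
          · left; exact ⟨k, by simpa [pt, sg] using hy, by simp [pt, sg]⟩
          · right; exact ⟨k, by simpa [pt, sg] using hy, by simp [pt, sg]⟩
        obtain ⟨b, hb⟩ := h4
        have h5 : InE P (q, b) (i '' X) := by
          rcases inE_or hF hP hA (q, b) with h | h
          · exact h
          · exfalso
            rw [inE_iff] at h
            exact hb (h.subset (fun k hk hk2 => hk2 hk))
        let e : E := ⟨(q, b), h5.mono (fun k hk => Set.image_subset_range _ _ hk)⟩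
        refine ⟨e, ?_⟩
        exact (h3 _ (hafix e) ((hle e X).2 h5)).resolve_left (hanb e)
      · exfalso
        refine ht (hfin.subset ?_)
        rintro y ⟨hy, hy2⟩
        exact Quotient.exact (s := S) (hy2 : o y = _).symm
  let τ : E → E := fun e => if h : InE P (e.1.1, !e.1.2) R then ⟨_, h⟩ else e
  have hτ1 : ∀ e : E, (h : InE P (e.1.1, !e.1.2) R) → τ e = ⟨_, h⟩ := fun e h => dif_pos h
  have hτ2 : ∀ e : E, ¬ InE P (e.1.1, !e.1.2) R → τ e = e := fun e h => dif_neg h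
  have hτfix : ∀ e : E, τ e = e ↔ ¬ InE P (e.1.1, !e.1.2) R := by
    intro e
    constructor
    · intro h h'
      rw [hτ1 e h'] at h
      have := congrArg (fun e : E => e.1.2) h
      simp at this
    · exact hτ2 e
  have hinv : ∀ e, τ (τ e) = e := by
    intro e
    by_cases h : InE P (e.1.1, !e.1.2) R
    · rw [hτ1 e h]
      have : InE P (e.1.1, !!e.1.2) R := by simpa using e.2
      rw [hτ1 _ this]
      apply Subtype.ext; simp
    · rw [hτ2 e h, hτ2 e h]
  have hfx : Subtype.val '' {e : E | τ e = e} =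
      (fun e : Q × Bool => (e.1, !e.2)) '' {e ∈ {e | ¬ InE P e R} | InE P (e.1, !e.2) R} := by
    ext e
    constructor
    · rintro ⟨e, he, rfl⟩
      exact ⟨(e.1.1, !e.1.2), ⟨(hτfix e).1 he, by simpa using e.2⟩, by simp⟩
    · rintro ⟨e, he, rfl⟩
      exact ⟨⟨_, he.2⟩, (hτfix _).2 (by simpa using he.1), rfl⟩
  refine ⟨⟨E, fun e => pfinMk (eps e), hinj, hatom, hsurj, τ, hinv, ?_, ?_, ?_, ?_⟩⟩
  · intro x hx
    obtain ⟨X, rfl⟩ := pfinMk_surj x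
    have hA := (hfix X).1 hx
    have hb : {p : Q × ℤ | ¬ (P p.1 p.2 ∈ i '' X ↔ F (P p.1 p.2) ∈ i '' X)}.Finite :=
      hA.preimage (f := fun p : Q × ℤ => P p.1 p.2)
        (fun p _ p' _ h => Prod.ext (hP _ _ _ _ h).1 (hP _ _ _ _ h).2)
    have hb2 := (hb.image Prod.fst).prod (Set.finite_univ (α := Bool))
    refine (hb2.preimage (f := (Subtype.val : E → Q × Bool)) Subtype.val_injective.injOn).subset ?_
    rintro e ⟨he, he'⟩
    refine ⟨?_, Set.mem_univ _⟩
    by_contra hcon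
    have hc : ∀ z, (P e.1.1 z ∈ i '' X ↔ P e.1.1 (z + 1) ∈ i '' X) := by
      intro z
      by_contra h
      exact hcon ⟨(e.1.1, z), by simpa [hF] using h, rfl⟩
    have hc2 : ∀ z, (P e.1.1 z ∈ i '' X ↔ P e.1.1 0 ∈ i '' X) := by
      intro z
      induction z using Int.induction_on with
      | zero => rfl
      | succ k ih => rw [← hc, ih]
      | pred k ih => rw [hc]; simpa using ih
    apply he'
    rw [hle] at he ⊢
    obtain ⟨k, hk⟩ := he.exists
    have h0 := (hc2 _).1 hk
    by_cases h : InE P (e.1.1, !e.1.2) R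
    · rw [hτ1 e h]
      exact Eventually.of_forall (fun k => (hc2 _).2 h0)
    · rw [hτ2 e h]; exact he
  · intro S hS
    let A : Set M := {m | ∃ q z, P q z = m ∧ ∃ b h, (⟨(q, b), h⟩ : E) ∈ S}
    have hAin : ∀ q z, P q z ∈ A ↔ ∃ b h, (⟨(q, b), h⟩ : E) ∈ S := by
      intro q z
      constructor
      · rintro ⟨q', z', h, h'⟩
        obtain ⟨rfl, -⟩ := hP _ _ _ _ h
        exact h'
      · intro h; exact ⟨q, z, rfl, h⟩
    have hAinv : AInv F A := by
      apply AInv.of_invariant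
      intro m
      constructor
      · rintro ⟨q, z, rfl, h⟩; rw [hF]; exact ⟨q, z + 1, rfl, h⟩
      · rintro ⟨q, z, hz, h⟩
        refine ⟨q, z - 1, F.injective ?_, h⟩
        rw [hF, ← hz]; simp
    refine ⟨pfinMk (i ⁻¹' A), ?_, ?_⟩
    · rw [hfix, Set.image_preimage_eq_inter_range]; exact hAinv.inter hR
    · intro e
      rw [hle, Set.image_preimage_eq_inter_range]
      constructor
      · intro h
        obtain ⟨k, hk⟩ := h.exists
        obtain ⟨b, hb, hbS⟩ := (hAin _ _).1 hk.1
        by_cases hbe : b = e.1.2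
        · subst hbe; exact hbS
        · have hbe : e.1.2 = !b := Bool.eq_not_iff.2 (Ne.symm hbe)
          have h7 : InE P (e.1.1, !b) R := by rw [← hbe]; exact e.2
          have := hS _ hbS
          rw [hτ1 _ h7] at this
          convert this using 1
          apply Subtype.ext; exact Prod.ext rfl hbe
      · intro h
        exact (Eventually.of_forall fun k => (hAin _ _).2 ⟨e.1.2, e.2, h⟩).and e.2
  · refine Set.Finite.of_finite_image (f := Subtype.val) ?_ Subtype.val_injective.injOn
    rw [hfx]
    exact (hmf.subset (fun e he => he.1)).image _
  · have hswinj : Function.Injective (fun e : Q × Bool => (e.1, !e.2)) := by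
      rintro ⟨a, b⟩ ⟨c, d⟩ h; simpa using h
    rw [← Set.ncard_image_of_injective _ Subtype.val_injective, hfx,
      Set.ncard_image_of_injective _ hswinj, ← hmc]
    have := swap_card {e : Q × Bool | ¬ InE P e R} hmf
    simpa only [Set.mem_ofPred_eq, not_not] using this

abbrev CC (f : AlmostPerm) : Type := ↥(f.ranᶜ) ⊕ ↥(f.domᶜ)
abbrev MM (f : AlmostPerm) : Type := ℕ ⊕ (CC f × ℕ)

open Classical in
noncomputable def fwd (f : AlmostPerm) : MM f → MM f
  | Sum.inl x => if h : x ∈ f.dom then Sum.inl (f.toFun x) else Sum.inr (Sum.inr ⟨x, h⟩, 0)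
  | Sum.inr (Sum.inl u, 0) => Sum.inl u.1
  | Sum.inr (Sum.inl u, k + 1) => Sum.inr (Sum.inl u, k)
  | Sum.inr (Sum.inr v, k) => Sum.inr (Sum.inr v, k + 1)

lemma fwd_dom {f : AlmostPerm} {x : ℕ} (h : x ∈ f.dom) :
    fwd f (Sum.inl x) = Sum.inl (f.toFun x) := by simp [fwd, h]

lemma fwd_ndom {f : AlmostPerm} {x : ℕ} (h : x ∉ f.dom) :
    fwd f (Sum.inl x) = Sum.inr (Sum.inr ⟨x, h⟩, 0) := by simp [fwd, h]

lemma fwd_u0 {f : AlmostPerm} (u : ↥(f.ranᶜ)) :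
    fwd f (Sum.inr (Sum.inl u, 0)) = Sum.inl u.1 := by simp [fwd]

lemma fwd_us {f : AlmostPerm} (u : ↥(f.ranᶜ)) (k : ℕ) :
    fwd f (Sum.inr (Sum.inl u, k + 1)) = Sum.inr (Sum.inl u, k) := by simp [fwd]

lemma fwd_v {f : AlmostPerm} (v : ↥(f.domᶜ)) (k : ℕ) :
    fwd f (Sum.inr (Sum.inr v, k)) = Sum.inr (Sum.inr v, k + 1) := by simp [fwd]

lemma fwd_bij (f : AlmostPerm) : Function.Bijective (fwd f) := by
  constructor
  · have hu : ∀ (u : ↥(f.ranᶜ)) x, x ∈ f.dom → f.toFun x ≠ u.1 := fun u x hx h =>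
      u.2 (h ▸ ⟨x, hx, rfl⟩)
    rintro (x | ⟨u | v, k⟩) (y | ⟨u' | v', k'⟩) h
    · by_cases hx : x ∈ f.dom <;> by_cases hy : y ∈ f.dom
      · rw [fwd_dom hx, fwd_dom hy] at h
        rw [f.injOn hx hy (by simpa using h)]
      · rw [fwd_dom hx, fwd_ndom hy] at h; simp at h
      · rw [fwd_ndom hx, fwd_dom hy] at h; simp at h
      · rw [fwd_ndom hx, fwd_ndom hy] at h; simpa using h
    · by_cases hx : x ∈ f.dom <;> rcases k' with _ | k'
      · rw [fwd_dom hx, fwd_u0] at h; exact absurd (by simpa using h) (hu u' x hx)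
      · rw [fwd_dom hx, fwd_us] at h; simp at h
      · rw [fwd_ndom hx, fwd_u0] at h; simp at h
      · rw [fwd_ndom hx, fwd_us] at h; simp at h
    · by_cases hx : x ∈ f.dom
      · rw [fwd_dom hx, fwd_v] at h; simp at h
      · rw [fwd_ndom hx, fwd_v] at h; simp at h
    · by_cases hx : y ∈ f.dom <;> rcases k with _ | k
      · rw [fwd_dom hx, fwd_u0] at h; exact absurd (by simpa using h.symm) (hu u y hx)
      · rw [fwd_dom hx, fwd_us] at h; simp at h
      · rw [fwd_ndom hx, fwd_u0] at h; simp at h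
      · rw [fwd_ndom hx, fwd_us] at h; simp at h
    · rcases k with _ | k <;> rcases k' with _ | k'
      · rw [fwd_u0, fwd_u0] at h
        have : u = u' := Subtype.ext (by simpa using h)
        rw [this]
      · rw [fwd_u0, fwd_us] at h; simp at h
      · rw [fwd_us, fwd_u0] at h; simp at h
      · rw [fwd_us, fwd_us] at h; simpa using h
    · rcases k with _ | k
      · rw [fwd_u0, fwd_v] at h; simp at h
      · rw [fwd_us, fwd_v] at h; simp at h
    · by_cases hx : y ∈ f.dom
      · rw [fwd_dom hx, fwd_v] at h; simp at h
      · rw [fwd_ndom hx, fwd_v] at h; simp at h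
    · rcases k' with _ | k'
      · rw [fwd_u0, fwd_v] at h; simp at h
      · rw [fwd_us, fwd_v] at h; simp at h
    · rw [fwd_v, fwd_v] at h; simpa using h
  · rintro (y | ⟨u | v, k⟩)
    · by_cases hy : y ∈ f.ran
      · obtain ⟨x, hx, rfl⟩ := hy
        exact ⟨_, fwd_dom hx⟩
      · exact ⟨_, fwd_u0 ⟨y, hy⟩⟩
    · exact ⟨_, fwd_us u k⟩
    · rcases k with _ | k
      · exact ⟨_, fwd_ndom v.2⟩
      · exact ⟨_, fwd_v v k⟩

noncomputable def FF (f : AlmostPerm) : Equiv.Perm (MM f) := Equiv.ofBijective _ (fwd_bij f)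

lemma FF_apply (f : AlmostPerm) (m : MM f) : FF f m = fwd f m := rfl

lemma ff_bad (f : AlmostPerm) : (Sum.inl '' f.domᶜ ∪
    Set.range (fun u : ↥(f.ranᶜ) => (Sum.inr (Sum.inl u, 0) : MM f)) : Set (MM f)).Finite := by
  have : Finite ↥(f.ranᶜ) := f.cofinite_ran
  exact (f.cofinite_dom.image _).union (Set.finite_range _)

lemma ff_fix (f : AlmostPerm) (X : Set ℕ) :
    pfinMk (f.image X) = pfinMk X ↔ AInv (FF f) (Sum.inl '' X) := by
  rw [pfinMk_eq, Filter.eventually_cofinite]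
  have him : ∀ x ∈ f.dom, (f.toFun x ∈ f.image X ↔ x ∈ X) := by
    intro x hx
    constructor
    · rintro ⟨y, ⟨hy, hy2⟩, h⟩
      rw [← f.injOn hy2 hx h]; exact hy
    · intro h; exact ⟨x, ⟨h, hx⟩, rfl⟩
  constructor
  · intro h
    have h1 := (h.image (Sum.inl : ℕ → MM f)).preimage (f := FF f) (FF f).injective.injOn
    refine (h1.union (ff_bad f)).subset ?_
    rintro (x | ⟨u | v, k⟩) hm
    · by_cases hx : x ∈ f.dom
      · left
        refine ⟨f.toFun x, ?_, (fwd_dom hx).symm⟩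
        simp only [Set.mem_ofPred_eq, FF_apply, fwd_dom hx] at hm
        simpa [him x hx] using hm
      · right; left; exact ⟨x, hx, rfl⟩
    · rcases k with _ | k
      · right; right; exact ⟨u, rfl⟩
      · simp [FF_apply, fwd_us] at hm
    · simp [FF_apply, fwd_v] at hm
  · intro h
    have h1 := (h.image (FF f)).preimage (f := (Sum.inl : ℕ → MM f)) Sum.inl_injective.injOn
    refine (h1.union f.cofinite_ran).subset ?_
    intro y hy
    by_cases hr : y ∈ f.ran
    · left
      obtain ⟨x, hx, rfl⟩ := hr
      refine ⟨Sum.inl x, ?_, fwd_dom hx⟩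
      simp only [Set.mem_ofPred_eq, FF_apply, fwd_dom hx]
      simp only [Set.mem_ofPred_eq, him x hx] at hy
      simpa using hy
    · right; exact hr

def dir {f : AlmostPerm} : CC f → Bool
  | Sum.inl _ => false
  | Sum.inr _ => true

lemma ff_same (f : AlmostPerm) (c : CC f) (k : ℕ) :
    (FF f).SameCycle (Sum.inr (c, 0)) (Sum.inr (c, k)) := by
  induction k with
  | zero => exact Equiv.Perm.SameCycle.refl _ _
  | succ k ih =>
    refine ih.trans ?_
    rcases c with u | v
    · rw [← fwd_us, ← FF_apply]
      exact Equiv.Perm.sameCycle_apply_left.2 (Equiv.Perm.SameCycle.refl _ _)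
    · rw [← fwd_v, ← FF_apply]
      exact Equiv.Perm.sameCycle_apply_right.2 (Equiv.Perm.SameCycle.refl _ _)

lemma ff_miss (f : AlmostPerm) (Q : Type) (P : Q → ℤ → MM f)
    (hF : ∀ q z, FF f (P q z) = P q (z + 1))
    (hP : ∀ q z q' z', P q z = P q' z' → q = q' ∧ z = z')
    (hm : ∀ m, (∃ q z, P q z = m) ∨ {y | (FF f).SameCycle m y}.Finite)
    (hR : AInv (FF f) (Set.range Sum.inl)) :
    {e : Q × Bool | ¬ InE P e (Set.range Sum.inl)}.Finite ∧
    {e : Q × Bool | ¬ InE P e (Set.range Sum.inl)}.ncard =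
      Nat.card ↥(f.ranᶜ) + Nat.card ↥(f.domᶜ) := by
  have hf1 : Finite ↥(f.ranᶜ) := f.cofinite_ran
  have hf2 : Finite ↥(f.domᶜ) := f.cofinite_dom
  have hex : ∀ c : CC f, ∃ q z, ∀ k : ℕ, P q (z + sg (dir c) * k) = Sum.inr (c, k) := by
    intro c
    rcases hm (Sum.inr (c, 0)) with ⟨q, z, hz⟩ | h
    · refine ⟨q, z, ?_⟩
      intro k
      induction k with
      | zero => simpa using hz
      | succ k ih =>
        rcases c with u | v
        · apply (FF f).injective
          rw [hF, FF_apply, fwd_us, ← ih]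
          congr 1; simp [dir, sg]; ring
        · rw [← fwd_v, ← FF_apply, ← ih, hF]
          congr 1; simp [dir, sg]; ring
    · exfalso
      have hinj : Function.Injective (fun k : ℕ => (Sum.inr (c, k) : MM f)) := by
        intro a b h; simpa using h
      refine Set.infinite_range_of_injective hinj (h.subset ?_)
      rintro _ ⟨k, rfl⟩
      exact ff_same f c k
  choose q z hqz using hex
  have h0 : ∀ c, P (q c) (z c - sg (dir c)) ∈ Set.range (Sum.inl : ℕ → MM f) := by
    intro c
    have h := hqz c 0
    simp only [Nat.cast_zero, mul_zero, add_zero] at h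
    rcases c with u | v
    · refine ⟨u.1, ?_⟩
      rw [← fwd_u0, ← FF_apply, ← h, hF]
      simp [dir, sg]
    · refine ⟨v.1, ?_⟩
      apply (FF f).injective
      rw [FF_apply, fwd_ndom v.2, hF]
      simp only [dir, sg, if_true, sub_add_cancel]
      exact h.symm
  let φ : CC f → Q × Bool := fun c => (q c, dir c)
  have hφi : Function.Injective φ := by
    intro c c' h
    have hq : q c = q c' := congrArg Prod.fst h
    have hd : dir c = dir c' := congrArg Prod.snd h
    have : ∃ k k' : ℕ, z c + sg (dir c) * k = z c' + sg (dir c') * k' := by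
      rw [← hd]
      rcases sg_cases (dir c) with hs | hs
      · exact ⟨(z c' - z c).toNat, (z c - z c').toNat, by rw [hs]; omega⟩
      · exact ⟨(z c - z c').toNat, (z c' - z c).toNat, by rw [hs]; omega⟩
    obtain ⟨k, k', hk⟩ := this
    have h1 := hqz c k
    rw [hq, hk, hqz c' k'] at h1
    simp at h1
    exact h1.1.symm
  have hφr : {e : Q × Bool | ¬ InE P e (Set.range Sum.inl)} = Set.range φ := by
    ext e
    constructor
    · intro he
      have he2 := (inE_or hF hP hR e).resolve_left he
      obtain ⟨K, hK⟩ := eventually_atTop.1 he2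
      have hK0 := hK K le_rfl
      rcases hpt : pt P e K with x | ⟨c, l⟩
      · exact absurd ⟨x, hpt.symm⟩ hK0
      refine ⟨c, ?_⟩
      have hpt2 := hpt
      rw [← hqz c l] at hpt2
      obtain ⟨h1, h2⟩ := hP _ _ _ _ hpt2
      by_cases hd : dir c = e.2
      · exact Prod.ext h1.symm hd
      · exfalso
        have hs : sg (dir c) = - sg e.2 := by
          revert hd
          generalize dir c = a
          generalize e.2 = b
          cases a <;> cases b <;> simp [sg]
        apply hK (K + l + 1) (by omega)
        have := h0 c
        rw [← h1] at this
        unfold pt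
        convert this using 2
        rw [hs] at h2 ⊢
        push_cast
        linear_combination h2
    · rintro ⟨c, rfl⟩ hin
      obtain ⟨k, ⟨x, hx⟩, hk⟩ := (hin.and (eventually_ge_atTop (z c).natAbs)).exists
      have hk2 : sg (dir c) * (k : ℤ) =
          z c + sg (dir c) * ((k - sg (dir c) * z c).toNat : ℕ) := by
        rcases sg_cases (dir c) with hs | hs <;> rw [hs] <;> omega
      have h3 : pt P (φ c) k = P (q c) (sg (dir c) * k) := rfl
      rw [h3, hk2, hqz] at hx
      simp at hx
  rw [hφr]
  refine ⟨Set.finite_range _, ?_⟩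
  rw [← Nat.card_coe_set_eq, Nat.card_range_of_injective hφi, Nat.card_sum]

lemma exists_endSys (f : AlmostPerm) (α : PFin → PFin)
    (hα : ∀ A : Set ℕ, α (pfinMk A) = pfinMk (f.image A)) :
    Nonempty (EndSys α (Nat.card ↥(f.ranᶜ) + Nat.card ↥(f.domᶜ))) := by
  have hR : AInv (FF f) (Set.range Sum.inl) := by
    rw [← Set.image_univ, ← ff_fix, pfinMk_eq, Filter.eventually_cofinite]
    refine f.cofinite_ran.subset ?_
    intro y hy
    simpa [AlmostPerm.image] using hy
  exact mkEndSys α (FF f) Sum.inl Sum.inl_injective (fun X => by rw [hα, ff_fix]) hR _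
    (fun Q P h1 h2 h3 => ff_miss f Q P h1 h2 h3 hR)

/-- Trivial automorphisms whose indices have different
parities are not conjugate: no automorphism `γ` of `P(ℕ)/Fin` satisfies
`γ∘α_f = α_g∘γ`. -/
theorem not_conjugate_of_ne_parity (f g : AlmostPerm)
    (hpar : f.index % 2 ≠ g.index % 2)
    (αf αg : PFin → PFin)
    (hαf : ∀ A : Set ℕ, αf (pfinMk A) = pfinMk (f.image A))
    (hαg : ∀ A : Set ℕ, αg (pfinMk A) = pfinMk (g.image A)) :
    ¬ ∃ γ : PFin ≃o PFin, ∀ x : PFin, γ (αf x) = αg (γ x) := by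
  rintro ⟨γ, hγ⟩
  obtain ⟨s⟩ := exists_endSys f αf hαf
  obtain ⟨t⟩ := exists_endSys g αg hαg
  have h := endSys_compare γ hγ s t
  apply hpar
  unfold AlmostPerm.index
  unfold Nat.ModEq at h
  omega
end
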